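/- Let q ∈ ℂ with 0 < |q| < 1, let x ∈ ℂ∖{0} with x² ∉ q^ℤ, and let t ∈ ℂ∖{0} with t ∉ q^ℤ. Then the Wronskian combination of the two solutions at t = ∞ of the q-difference equation tq^{−1} f(q^{−1}t) + (1 − (x+x^{−1})t) f(t) + tq f(qt) = 0 satisfies g^{(0,x^{−1})}(t,x,q) · g^{(0,x)}(qt,x,q) − g^{(0,x^{−1})}(qt,x,q) · g^{(0,x)}(t,x,q) = q^{−1} x t^{−2} · θ(q^{−1}x;q)² θ(tx;q) θ(tx^{−1};q) / ( (1−x)² θ(x^{−2};q) θ(t;q)² (q;q)_∞³ ). -/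

import Mathlib

open Finset Filter

/-- Finite q-Pochhammer symbol `(x;q)_k = ∏_{j=0}^{k-1} (1 - x q^j)`. -/
noncomputable def qPoch (x q : ℂ) (k : ℕ) : ℂ := ∏ j ∈ Finset.range k, (1 - x * q ^ j)

/-- Infinite q-Pochhammer symbol `(x;q)_∞ = ∏_{j=0}^{∞} (1 - x q^j)`. -/
noncomputable def qPochInf (x q : ℂ) : ℂ := ∏' j : ℕ, (1 - x * q ^ j)

/-- The Jacobi theta function `θ(t;q) = Σ_{k∈ℤ} (−1)^k q^{k(k+1)/2} t^k`. -/
noncomputable def jtheta (t q : ℂ) : ℂ :=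
  ∑' k : ℤ, (-1 : ℂ) ^ k * q ^ (k * (k + 1) / 2) * t ^ k

/-- The derivative `θ'(t;q) = Σ_{k∈ℤ} (−1)^k k q^{k(k+1)/2} t^k` (with respect to t d/dt). -/
noncomputable def jthetaD (t q : ℂ) : ℂ :=
  ∑' k : ℤ, (-1 : ℂ) ^ k * (k : ℂ) * q ^ (k * (k + 1) / 2) * t ^ k

/-- The Eisenstein-type series `E₁(q) = 1 − 4 Σ_{j=1}^∞ q^j/(1−q^j)`. -/
noncomputable def E1 (q : ℂ) : ℂ := 1 - 4 * ∑' j : ℕ, q ^ (j + 1) / (1 - q ^ (j + 1))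

/-- The Appell-Lerch sum
`AL(t,λ,q) = θ(λ;q)⁻¹ Σ_{ℓ∈ℤ} (−1)^ℓ q^{ℓ(ℓ+1)/2} λ^ℓ / (1 − λ t q^ℓ)`. -/
noncomputable def AL (t lam q : ℂ) : ℂ :=
  (jtheta lam q)⁻¹ *
    ∑' k : ℤ, (-1 : ℂ) ^ k * q ^ (k * (k + 1) / 2) * lam ^ k / (1 - lam * t * q ^ k)

/-- The solution `g^{(0,0)}(t,q) = Σ_{k≥0} (−1)^k q^{k(k+1)/2} (q;q)_k^{−2} t^{−1−k}`. -/
noncomputable def g00 (t q : ℂ) : ℂ :=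
  ∑' k : ℕ, (-1 : ℂ) ^ k * q ^ (k * (k + 1) / 2) / (qPoch q q k) ^ 2 * t ^ (-1 - (k : ℤ))

/-- The solution `g^{(0,1)}(t,q)`. -/
noncomputable def g01 (t q : ℂ) : ℂ :=
  ∑' k : ℕ,
    (E1 q / 2 - 1 / 2 - jthetaD t⁻¹ q / jtheta t⁻¹ q +
        ∑ j ∈ Finset.range k, (1 + q ^ (j + 1)) / (1 - q ^ (j + 1))) *
      ((-1 : ℂ) ^ k * q ^ (k * (k + 1) / 2) / (qPoch q q k) ^ 2 * t ^ (-1 - (k : ℤ)))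

/-- The solution `f^{(−1)}(t,x,q)` at `t = 0` of the x-deformed 4₁ equation. -/
noncomputable def fneg1 (t x q : ℂ) : ℂ :=
  jtheta (q⁻¹ * x) q / ((1 - x) * jtheta (q⁻¹ * t) q * qPochInf q q) *
    ∑' k : ℕ, ∑ l ∈ Finset.range (k + 1),
      (-1 : ℂ) ^ k * q ^ (k * (k + 1) / 2) * x ^ (2 * (l : ℤ) - k) * t ^ k /
        (qPoch q q l * qPoch q q (k - l))

/-- The solution `g^{(0,x^{−1})}(t,x,q)` at `t = ∞` of the x-deformed 4₁ equation.
The solution `g^{(0,x)}(t,x,q)` is `gxinv t x⁻¹ q`. -/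
noncomputable def gxinv (t x q : ℂ) : ℂ :=
  jtheta (q⁻¹ * x) q * jtheta (t * x) q * qPochInf (q * x ^ 2) q /
      (jtheta t q * jtheta (x ^ 2) q * (1 - x) * qPochInf q q) *
    ∑' k : ℕ, (-1 : ℂ) ^ k * q ^ (k * (k + 1) / 2) * x ^ k * t ^ (-(k : ℤ) - 1) /
      (qPoch q q k * qPoch (q * x ^ 2) q k)

/-! ### Elementary facts -/

lemma hasSum_cast {ι : Type*} {f g : ι → ℂ} {a b : ℂ} (h : HasSum f a) (hf : ∀ k, g k = f k)
    (ha : b = a) : HasSum g b := by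
  rw [ha, show g = f from funext hf]; exact h

lemma qPoch_succ (x q : ℂ) (k : ℕ) : qPoch x q (k + 1) = qPoch x q k * (1 - x * q ^ k) := by
  simp [qPoch, Finset.prod_range_succ]

lemma qPoch_zero (x q : ℂ) : qPoch x q 0 = 1 := by simp [qPoch]

lemma summable_mul_pow (x q : ℂ) (hq1 : ‖q‖ < 1) : Summable fun j : ℕ => ‖-(x * q ^ j)‖ := by
  simp only [norm_neg, norm_mul, norm_pow]
  exact (summable_geometric_of_lt_one (norm_nonneg _) hq1).mul_left _

lemma multipliable_qPoch (x q : ℂ) (hq1 : ‖q‖ < 1) :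
    Multipliable fun j : ℕ => 1 - x * q ^ j := by
  simpa [sub_eq_add_neg] using multipliable_one_add_of_summable (summable_mul_pow x q hq1)

lemma tendsto_qPoch (x q : ℂ) (hq1 : ‖q‖ < 1) :
    Tendsto (qPoch x q) atTop (nhds (qPochInf x q)) :=
  (multipliable_qPoch x q hq1).hasProd.tendsto_prod_nat

lemma qPochInf_ne_zero (x q : ℂ) (hq1 : ‖q‖ < 1) (h : ∀ j : ℕ, 1 - x * q ^ j ≠ 0) :
    qPochInf x q ≠ 0 := by
  have := tprod_one_add_ne_zero_of_summable (f := fun j : ℕ => -(x * q ^ j))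
    (by simpa [sub_eq_add_neg] using h) (summable_mul_pow x q hq1)
  simpa [qPochInf, sub_eq_add_neg] using this

lemma qPochInf_shift (x q : ℂ) (hq1 : ‖q‖ < 1) :
    qPochInf x q = (1 - x) * qPochInf (q * x) q := by
  have h1 := (tendsto_qPoch x q hq1).comp (tendsto_add_atTop_nat 1)
  have h2 := (tendsto_qPoch (q * x) q hq1).const_mul (1 - x)
  refine tendsto_nhds_unique h1 (h2.congr fun n => ?_)
  simp only [Function.comp, qPoch, Finset.prod_range_succ']
  rw [mul_comm]
  simp only [pow_zero, mul_one, pow_succ]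
  congr 1
  exact Finset.prod_congr rfl fun j _ => by ring

lemma one_sub_pow_ne (q : ℂ) (hq1 : ‖q‖ < 1) (j : ℕ) : 1 - q * q ^ j ≠ 0 := by
  intro h
  have h1 : q ^ (j + 1) = 1 := by rw [pow_succ]; linear_combination -h
  have h2 : ‖q‖ ^ (j + 1) = 1 := by rw [← norm_pow, h1, norm_one]
  exact absurd h2 (pow_lt_one₀ (norm_nonneg _) hq1 (by omega)).ne

lemma qPoch_ne_zero (x q : ℂ) (h : ∀ j : ℕ, 1 - x * q ^ j ≠ 0) (k : ℕ) : qPoch x q k ≠ 0 :=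
  Finset.prod_ne_zero_iff.mpr fun j _ => h j

lemma tri_nat (k : ℕ) : (k + 1) * (k + 1 + 1) / 2 = k * (k + 1) / 2 + (k + 1) := by
  rw [show (k + 1) * (k + 1 + 1) = k * (k + 1) + (k + 1) * 2 by ring,
    Nat.add_mul_div_right _ _ (by norm_num)]

lemma tri_int (k : ℤ) : (k + 1) * (k + 1 + 1) / 2 = k * (k + 1) / 2 + (k + 1) := by
  rw [show (k + 1) * (k + 1 + 1) = k * (k + 1) + (k + 1) * 2 by ring,
    Int.add_mul_ediv_right _ _ (by norm_num)]

/-! ### Theta series -/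

/-- The sign and Gaussian factor of the theta series. -/
noncomputable def thc (q : ℂ) (k : ℤ) : ℂ := (-1 : ℂ) ^ k * q ^ (k * (k + 1) / 2)

lemma thc_succ (q : ℂ) (hq : q ≠ 0) (k : ℤ) : thc q (k + 1) = -(thc q k * (q ^ k * q)) := by
  unfold thc
  rw [tri_int, zpow_add₀ hq, zpow_add₀ hq k 1, zpow_add₀ (by norm_num : (-1 : ℂ) ≠ 0)]
  simp; ring

lemma thc_pred (q : ℂ) (hq : q ≠ 0) (k : ℤ) : thc q (k - 1) = -(thc q k * (q ^ k)⁻¹) := by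
  have h := thc_succ q hq (k - 1)
  rw [sub_add_cancel, zpow_sub₀ hq, zpow_one] at h
  have := zpow_ne_zero k hq
  rw [h]; field_simp

lemma thc_zero (q : ℂ) : thc q 0 = 1 := by simp [thc]

lemma thc_ne (q : ℂ) (hq : q ≠ 0) (k : ℤ) : thc q k ≠ 0 :=
  mul_ne_zero (zpow_ne_zero _ (by norm_num)) (zpow_ne_zero _ hq)

lemma ratio_zero {f : ℕ → ℂ} (r : ℕ → ℂ) (hf : ∀ n, f n ≠ 0) (h : ∀ n, f (n + 1) = f n * r n)
    (hr : Tendsto r atTop (nhds 0)) : Summable f := by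
  refine summable_of_ratio_test_tendsto_lt_one (l := 0) (by norm_num) (Eventually.of_forall hf) ?_
  have : (fun n => ‖f (n + 1)‖ / ‖f n‖) = fun n => ‖r n‖ := by
    funext n
    rw [h, norm_mul, mul_div_cancel_left₀ _ (norm_ne_zero_iff.mpr (hf n))]
  rw [this]
  simpa using hr.norm

lemma tendsto_qpow (q : ℂ) (hq1 : ‖q‖ < 1) : Tendsto (fun n : ℕ => q ^ n) atTop (nhds 0) :=
  tendsto_pow_atTop_nhds_zero_of_norm_lt_one hq1

lemma summable_theta (q t : ℂ) (hq : q ≠ 0) (hq1 : ‖q‖ < 1) (ht : t ≠ 0) :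
    Summable fun k : ℤ => thc q k * t ^ k := by
  refine Summable.of_nat_of_neg ?_ ?_
  · refine ratio_zero (fun n : ℕ => -(q ^ n * (q * t)))
      (fun n => mul_ne_zero (thc_ne q hq _) (zpow_ne_zero _ ht)) (fun n => ?_) ?_
    · push_cast
      rw [thc_succ q hq, zpow_add₀ ht]
      simp; ring
    · simpa using ((tendsto_qpow q hq1).mul_const (q * t)).neg
  · refine ratio_zero (fun n : ℕ => -(q ^ n * t⁻¹))
      (fun n => mul_ne_zero (thc_ne q hq _) (zpow_ne_zero _ ht)) (fun n => ?_) ?_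
    · push_cast
      rw [show (-((n : ℤ) + 1)) = -(n : ℤ) - 1 by ring, thc_pred q hq, zpow_sub₀ ht]
      simp; ring
    · simpa using ((tendsto_qpow q hq1).mul_const (t⁻¹)).neg

lemma hasSum_theta (q t : ℂ) (hq : q ≠ 0) (hq1 : ‖q‖ < 1) (ht : t ≠ 0) :
    HasSum (fun k : ℤ => thc q k * t ^ k) (jtheta t q) :=
  (summable_theta q t hq hq1 ht).hasSum

lemma theta_shift (q t : ℂ) (hq : q ≠ 0) (hq1 : ‖q‖ < 1) (ht : t ≠ 0) :
    jtheta (q * t) q = -(q⁻¹ * t⁻¹) * jtheta t q := by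
  have h1 := hasSum_theta q (q * t) hq hq1 (mul_ne_zero hq ht)
  have h2 := ((Equiv.addRight (1 : ℤ)).hasSum_iff.mpr (hasSum_theta q t hq hq1 ht)).mul_left
    (-(q⁻¹ * t⁻¹))
  refine h1.unique ?_
  refine hasSum_cast h2 (fun k => ?_) rfl
  simp only [Function.comp, Equiv.coe_addRight]
  rw [thc_succ q hq, zpow_add₀ ht, mul_zpow, zpow_one]
  field_simp

lemma theta_inv (q t : ℂ) (hq : q ≠ 0) (hq1 : ‖q‖ < 1) (ht : t ≠ 0) :
    jtheta t⁻¹ q = jtheta (q⁻¹ * t) q := by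
  have h1 := (Equiv.neg ℤ).hasSum_iff.mpr (hasSum_theta q t⁻¹ hq hq1 (inv_ne_zero ht))
  have h2 := hasSum_theta q (q⁻¹ * t) hq hq1 (mul_ne_zero (inv_ne_zero hq) ht)
  refine h1.unique ?_
  convert h2 using 1
  funext k
  simp only [Function.comp, Equiv.neg_apply]
  have : thc q (-k) = thc q k * (q ^ k)⁻¹ := by
    unfold thc
    rw [mul_assoc, ← zpow_neg, ← zpow_add₀ hq]
    congr 1
    · rw [zpow_neg, ← inv_zpow]; norm_num
    · congr 1
      rw [show k * (k + 1) = -k * (-k + 1) + k * 2 by ring,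
        Int.add_mul_ediv_right _ _ (by norm_num)]
      ring
  rw [this, mul_zpow, inv_zpow, inv_zpow, zpow_neg, inv_inv]
  ring

/-! ### Jacobi triple product -/

/-- Reciprocal of `(q;q)_k`, extended by zero to negative integers. -/
noncomputable def rP (q : ℂ) (k : ℤ) : ℂ := if 0 ≤ k then (qPoch q q k.toNat)⁻¹ else 0

lemma rP_nat (q : ℂ) (k : ℕ) : rP q k = (qPoch q q k)⁻¹ := by simp [rP]

lemma rP_rec (q : ℂ) (hq : q ≠ 0) (hq1 : ‖q‖ < 1) (k : ℤ) :
    rP q k = (1 - q * q ^ k) * rP q (k + 1) := by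
  rcases lt_trichotomy k (-1) with h | h | h
  · rw [rP, rP, if_neg (by omega), if_neg (by omega), mul_zero]
  · subst h
    simp [rP, hq]
  · obtain ⟨n, rfl⟩ := Int.eq_ofNat_of_zero_le (show 0 ≤ k by omega)
    rw [show (n : ℤ) + 1 = ((n + 1 : ℕ) : ℤ) by simp, rP_nat, rP_nat, qPoch_succ, zpow_natCast]
    have := one_sub_pow_ne q hq1 n
    have := qPoch_ne_zero q q (one_sub_pow_ne q hq1) n
    field_simp

/-- Coefficients of the finite triple product. -/
noncomputable def jc (q : ℂ) (n : ℕ) (k : ℤ) : ℂ :=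
  qPoch q q (2 * n) * (rP q (n + k) * rP q (n - k))

lemma finite_jtp (q t : ℂ) (hq : q ≠ 0) (hq1 : ‖q‖ < 1) (ht : t ≠ 0) (n : ℕ) :
    HasSum (fun k : ℤ => thc q k * jc q n k * t ^ k) (qPoch (q * t) q n * qPoch t⁻¹ q n) := by
  induction n with
  | zero =>
    have : (fun k : ℤ => thc q k * jc q 0 k * t ^ k) = fun k => if k = 0 then 1 else 0 := by
      funext k
      split_ifs with h
      · subst h; simp [jc, rP, qPoch_zero, thc_zero]
      · have : rP q (0 + k) * rP q (0 - k) = 0 := by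
          rcases lt_or_gt_of_ne h with h | h
          · rw [rP, if_neg (by omega), zero_mul]
          · rw [rP, rP, if_neg (show ¬ 0 ≤ 0 - k by omega), mul_zero]
        simp only [jc, Nat.cast_zero, this]; simp
    rw [this, qPoch_zero, qPoch_zero, mul_one]
    exact hasSum_ite_eq 0 1
  | succ n ih =>
    have h1 := ((Equiv.subRight (1 : ℤ)).hasSum_iff.mpr ih).mul_left (-(q * t * q ^ n))
    have h2 := ((Equiv.addRight (1 : ℤ)).hasSum_iff.mpr ih).mul_left (-(t⁻¹ * q ^ n))
    have h3 := (ih.mul_left (1 + q * q ^ n * q ^ n)).add (h1.add h2)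
    refine hasSum_cast h3 (fun k => ?_) ?_
    · simp only [Function.comp, Equiv.coe_addRight, Equiv.subRight_apply, jc]
      have e1 : rP q (n + k) = (1 - q * (q ^ n * q ^ k)) * rP q (n + k + 1) := by
        rw [rP_rec q hq hq1, zpow_add₀ hq, zpow_natCast]
      have e2 : rP q (n - k) = (1 - q * (q ^ n * (q ^ k)⁻¹)) * rP q (n - k + 1) := by
        rw [rP_rec q hq hq1, zpow_sub₀ hq, zpow_natCast, div_eq_mul_inv]
      have e3 : rP q (n + (k - 1)) = (1 - q ^ n * q ^ k) * rP q (n + k) := by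
        rw [rP_rec q hq hq1, zpow_add₀ hq, zpow_natCast, zpow_sub₀ hq, zpow_one]
        congr 2
        · field_simp
        · ring
      have e4 : rP q (n - (k + 1)) = (1 - q ^ n * (q ^ k)⁻¹) * rP q (n - k) := by
        rw [rP_rec q hq hq1, zpow_sub₀ hq, zpow_natCast, zpow_add₀ hq, zpow_one]
        congr 2
        · field_simp
        · ring
      rw [show (n : ℤ) - (k - 1) = n - k + 1 by ring, show (n : ℤ) + (k + 1) = n + k + 1 by ring,
        show ((n + 1 : ℕ) : ℤ) + k = n + k + 1 by push_cast; ring,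
        show ((n + 1 : ℕ) : ℤ) - k = n - k + 1 by push_cast; ring,
        e3, e4, e1, e2, thc_succ q hq, thc_pred q hq,
        show 2 * (n + 1) = 2 * n + 1 + 1 by ring, qPoch_succ, qPoch_succ,
        zpow_add₀ ht, zpow_sub₀ ht, zpow_one]
      have hk := zpow_ne_zero k hq
      have hr : q ^ (2 * n + 1) = q * q ^ n * q ^ n := by ring
      have hr' : q ^ (2 * n) = q ^ n * q ^ n := by ring
      rw [hr, hr']
      generalize rP q (n + k + 1) = A
      generalize rP q (n - k + 1) = B
      generalize qPoch q q (2 * n) = P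
      generalize q ^ n = Q
      generalize thc q k = T
      generalize t ^ k = S
      generalize q ^ k = K at *
      field_simp
      ring
    · rw [qPoch_succ, qPoch_succ]
      field_simp
      ring

lemma bdd_of_tendsto {f : ℕ → ℂ} {l : ℂ} (h : Tendsto f atTop (nhds l)) :
    ∃ C : ℝ, 0 ≤ C ∧ ∀ n, ‖f n‖ ≤ C := by
  obtain ⟨C, hC⟩ := (Metric.isBounded_range_of_tendsto f h).exists_norm_le
  exact ⟨C, (norm_nonneg _).trans (hC (f 0) ⟨0, rfl⟩), fun n => hC _ ⟨n, rfl⟩⟩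

theorem jtp (q t : ℂ) (hq : q ≠ 0) (hq1 : ‖q‖ < 1) (ht : t ≠ 0) :
    jtheta t q = qPochInf q q * (qPochInf (q * t) q * qPochInf t⁻¹ q) := by
  have hne := qPochInf_ne_zero q q hq1 (one_sub_pow_ne q hq1)
  have hlim := tendsto_qPoch q q hq1
  have hinv := hlim.inv₀ hne
  obtain ⟨C, hC0, hC⟩ := bdd_of_tendsto hlim
  obtain ⟨E, hE0, hE⟩ := bdd_of_tendsto hinv
  have hrP : ∀ k : ℤ, ‖rP q k‖ ≤ E := by
    intro k
    by_cases h : 0 ≤ k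
    · rw [rP, if_pos h]; exact hE _
    · rw [rP, if_neg h]; simpa using hE0
  have hrlim : Tendsto (fun k : ℤ => rP q k) atTop (nhds (qPochInf q q)⁻¹) := by
    have h1 : Tendsto Int.toNat atTop atTop :=
      tendsto_atTop.mpr fun b => by
        filter_upwards [eventually_ge_atTop (b : ℤ)] with a ha
        omega
    refine (hinv.comp h1).congr' ?_
    filter_upwards [eventually_ge_atTop (0 : ℤ)] with a ha
    simp [rP, ha]
  have hjc : ∀ k : ℤ, Tendsto (fun n : ℕ => jc q n k) atTop (nhds (qPochInf q q)⁻¹) := by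
    intro k
    have a1 : Tendsto (fun n : ℕ => (n : ℤ) + k) atTop atTop :=
      tendsto_atTop_add_const_right _ _ tendsto_natCast_atTop_atTop
    have a2 : Tendsto (fun n : ℕ => (n : ℤ) - k) atTop atTop :=
      tendsto_atTop_add_const_right _ _ tendsto_natCast_atTop_atTop
    have a3 : Tendsto (fun n : ℕ => 2 * n) atTop atTop :=
      tendsto_id.const_mul_atTop' (by norm_num)
    have := (hlim.comp a3).mul ((hrlim.comp a1).mul (hrlim.comp a2))
    rw [mul_inv_cancel_left₀ hne] at this
    exact this
  have key := tendsto_tsum_of_dominated_convergence (𝓕 := atTop)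
    (f := fun (n : ℕ) (k : ℤ) => thc q k * jc q n k * t ^ k)
    (g := fun k => thc q k * (qPochInf q q)⁻¹ * t ^ k)
    (bound := fun k => C * (E * E) * ‖thc q k * t ^ k‖)
    ((summable_theta q t hq hq1 ht).norm.mul_left _)
    (fun k => ((hjc k).const_mul _).mul_const _)
    (Eventually.of_forall fun n k => by
      rw [show thc q k * jc q n k * t ^ k = jc q n k * (thc q k * t ^ k) by ring, norm_mul]
      refine mul_le_mul_of_nonneg_right ?_ (norm_nonneg _)
      rw [jc, norm_mul, norm_mul]
      exact mul_le_mul (hC _) (mul_le_mul (hrP _) (hrP _) (norm_nonneg _) hE0)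
        (by positivity) hC0)
  have hL : Tendsto (fun n : ℕ => ∑' k : ℤ, thc q k * jc q n k * t ^ k) atTop
      (nhds (qPochInf (q * t) q * qPochInf t⁻¹ q)) := by
    refine ((tendsto_qPoch (q * t) q hq1).mul (tendsto_qPoch t⁻¹ q hq1)).congr fun n => ?_
    exact (finite_jtp q t hq hq1 ht n).tsum_eq.symm
  have hR : ∑' k : ℤ, thc q k * (qPochInf q q)⁻¹ * t ^ k = (qPochInf q q)⁻¹ * jtheta t q := by
    rw [← (hasSum_theta q t hq hq1 ht).tsum_eq, ← tsum_mul_left]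
    exact tsum_congr fun k => by ring
  rw [hR] at key
  rw [tendsto_nhds_unique hL key, mul_inv_cancel_left₀ hne]

/-! ### The entire series at infinity -/

/-- Coefficient of the series. -/
noncomputable def sc (q x : ℂ) (k : ℕ) : ℂ :=
  (-1 : ℂ) ^ k * q ^ (k * (k + 1) / 2) * x ^ k / (qPoch q q k * qPoch (q * x ^ 2) q k)

/-- The entire series in `u = 1/t`. -/
noncomputable def ser (q x u : ℂ) : ℂ := ∑' k : ℕ, sc q x k * u ^ k

lemma sc_succ (q x : ℂ) (hq1 : ‖q‖ < 1) (hx2 : ∀ j : ℕ, 1 - q * x ^ 2 * q ^ j ≠ 0) (k : ℕ) :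
    sc q x (k + 1) * ((1 - q * q ^ k) * (1 - q * x ^ 2 * q ^ k)) =
      -(q * q ^ k * x) * sc q x k := by
  unfold sc
  rw [tri_nat, qPoch_succ, qPoch_succ]
  have h1 := one_sub_pow_ne q hq1 k
  have h2 := hx2 k
  have h3 := qPoch_ne_zero q q (one_sub_pow_ne q hq1) k
  have h4 := qPoch_ne_zero (q * x ^ 2) q hx2 k
  rw [div_mul_eq_mul_div, ← mul_div_assoc, div_eq_div_iff (by positivity) (by positivity)]
  ring

lemma summable_ser (q x u : ℂ) (hq : q ≠ 0) (hq1 : ‖q‖ < 1) (hx : x ≠ 0)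
    (hx2 : ∀ j : ℕ, 1 - q * x ^ 2 * q ^ j ≠ 0) (hu : u ≠ 0) :
    Summable fun k : ℕ => sc q x k * u ^ k := by
  refine ratio_zero (fun k : ℕ => -(q * q ^ k * x) * u /
      ((1 - q * q ^ k) * (1 - q * x ^ 2 * q ^ k))) (fun k => ?_) (fun k => ?_) ?_
  · refine mul_ne_zero (div_ne_zero ?_ (mul_ne_zero ?_ ?_)) (pow_ne_zero _ hu)
    · exact mul_ne_zero (mul_ne_zero (pow_ne_zero _ (by norm_num)) (pow_ne_zero _ hq))
        (pow_ne_zero _ hx)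
    · exact qPoch_ne_zero q q (one_sub_pow_ne q hq1) k
    · exact qPoch_ne_zero (q * x ^ 2) q hx2 k
  · have h := sc_succ q x hq1 hx2 k
    have h1 := mul_ne_zero (one_sub_pow_ne q hq1 k) (hx2 k)
    rw [mul_div_assoc', eq_div_iff h1, pow_succ]
    linear_combination (u ^ k * u) * h
  · have h := tendsto_qpow q hq1
    have h1 := (((h.const_mul q).mul_const x).neg).mul_const u
    have h2 := ((h.const_mul q).const_sub 1).mul ((h.const_mul (q * x ^ 2)).const_sub 1)
    have h3 := h1.div h2 (by simp)
    simp only [mul_zero, zero_mul, neg_zero, zero_div] at h3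
    exact h3

lemma ser_eq (q x u : ℂ) (hq : q ≠ 0) (hq1 : ‖q‖ < 1) (hx : x ≠ 0)
    (hx2 : ∀ j : ℕ, 1 - q * x ^ 2 * q ^ j ≠ 0) (hu : u ≠ 0) :
    ser q x u - (1 + x ^ 2) * ser q x (q * u) + x ^ 2 * ser q x (q * (q * u)) =
      -(q * x * u) * ser q x (q * u) := by
  have hqu := mul_ne_zero hq hu
  have s0 := (summable_ser q x u hq hq1 hx hx2 hu).hasSum
  have s1 := (summable_ser q x (q * u) hq hq1 hx hx2 hqu).hasSum
  have s2 := (summable_ser q x (q * (q * u)) hq hq1 hx hx2 (mul_ne_zero hq hqu)).hasSum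
  have h := (s0.sub (s1.mul_left (1 + x ^ 2))).add (s2.mul_left (x ^ 2))
  have h' := (hasSum_nat_add_iff' 1).mpr h
  have hr := s1.mul_left (-(q * x * u))
  simp only [Finset.range_one, Finset.sum_singleton, pow_zero, mul_one] at h'
  rw [show ∀ a b c : ℂ, a - (b - (1 + x ^ 2) * b + x ^ 2 * b) = a from fun a b c => by ring] at h'
  · refine h'.unique ?_
    refine hasSum_cast hr (fun k => ?_) rfl
    have := sc_succ q x hq1 hx2 k
    simp only [mul_pow, pow_succ] at *
    linear_combination (u ^ k * u) * this
  · exact 0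

lemma tendsto_ser (q x u : ℂ) (hq : q ≠ 0) (hq1 : ‖q‖ < 1) (hx : x ≠ 0)
    (hx2 : ∀ j : ℕ, 1 - q * x ^ 2 * q ^ j ≠ 0) (hu : u ≠ 0) :
    Tendsto (fun n : ℕ => ser q x (q ^ n * u)) atTop (nhds 1) := by
  have key := tendsto_tsum_of_dominated_convergence (𝓕 := atTop)
    (f := fun (n : ℕ) (k : ℕ) => sc q x k * (q ^ n * u) ^ k)
    (g := fun k => sc q x k * 0 ^ k)
    (bound := fun k => ‖sc q x k * u ^ k‖)
    (summable_ser q x u hq hq1 hx hx2 hu).norm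
    (fun k => by
      have h : Tendsto (fun n : ℕ => q ^ n * u) atTop (nhds 0) := by
        simpa using (tendsto_qpow q hq1).mul_const u
      exact (h.pow k).const_mul _)
    (Eventually.of_forall fun n k => by
      rw [norm_mul, norm_mul]
      refine mul_le_mul_of_nonneg_left ?_ (norm_nonneg _)
      rw [norm_pow, norm_pow]
      refine pow_le_pow_left₀ (norm_nonneg _) ?_ _
      rw [norm_mul, norm_pow]
      exact mul_le_of_le_one_left (norm_nonneg _) (pow_le_one₀ (norm_nonneg _) hq1.le))
  have h0 : ∑' k : ℕ, sc q x k * 0 ^ k = 1 := by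
    rw [tsum_eq_single 0 (fun k hk => by simp [hk])]
    simp [sc, qPoch_zero]
  rw [h0] at key
  exact key

lemma casoratian (q x v : ℂ) (hq : q ≠ 0) (hq1 : ‖q‖ < 1) (hx : x ≠ 0)
    (hx2 : ∀ j : ℕ, 1 - q * x ^ 2 * q ^ j ≠ 0) (hy2 : ∀ j : ℕ, 1 - q * x⁻¹ ^ 2 * q ^ j ≠ 0)
    (hv : v ≠ 0) :
    x * ser q x (q * v) * ser q x⁻¹ v - x⁻¹ * ser q x v * ser q x⁻¹ (q * v) = x - x⁻¹ := by
  have hy := inv_ne_zero hx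
  let D : ℂ → ℂ := fun v =>
    x * ser q x (q * v) * ser q x⁻¹ v - x⁻¹ * ser q x v * ser q x⁻¹ (q * v)
  have step : ∀ w : ℂ, w ≠ 0 → D (q * w) = D w := by
    intro w hw
    have e1 := ser_eq q x w hq hq1 hx hx2 hw
    have e2 := ser_eq q x⁻¹ w hq hq1 hy hy2 hw
    simp only [D]
    have hxx : x * x⁻¹ = 1 := mul_inv_cancel₀ hx
    generalize x⁻¹ = y at *
    have e1' : x * ser q x (q * (q * w)) =
        (x + y - q * w) * ser q x (q * w) - y * ser q x w := by
      linear_combination y * e1 + (-x * ser q x (q * (q * w)) + x * ser q x (q * w)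
        - q * w * ser q x (q * w)) * hxx
    have e2' : y * ser q y (q * (q * w)) =
        (x + y - q * w) * ser q y (q * w) - x * ser q y w := by
      linear_combination x * e2 + (-y * ser q y (q * (q * w)) + y * ser q y (q * w)
        - q * w * ser q y (q * w)) * hxx
    linear_combination ser q y (q * w) * e1' - ser q x (q * w) * e2'
  have all : ∀ n : ℕ, D (q ^ n * v) = D v := by
    intro n
    induction n with
    | zero => simp
    | succ n ih =>
      rw [← ih, ← step _ (mul_ne_zero (pow_ne_zero n hq) hv)]
      congr 1; ring
  have t1 := tendsto_ser q x v hq hq1 hx hx2 hv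
  have t2 := tendsto_ser q x⁻¹ v hq hq1 hy hy2 hv
  have t3 := tendsto_ser q x (q * v) hq hq1 hx hx2 (mul_ne_zero hq hv)
  have t4 := tendsto_ser q x⁻¹ (q * v) hq hq1 hy hy2 (mul_ne_zero hq hv)
  have t5 := ((t3.const_mul x).mul t2).sub ((t1.const_mul x⁻¹).mul t4)
  have t6 : Tendsto (fun _ : ℕ => D v) atTop (nhds (x * 1 * 1 - x⁻¹ * 1 * 1)) := by
    refine t5.congr fun n => ?_
    rw [← all n]
    simp only [D]
    rw [show q ^ n * (q * v) = q * (q ^ n * v) by ring]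
  have := tendsto_nhds_unique tendsto_const_nhds t6
  simpa [D] using this

lemma ser_sum (q x t : ℂ) (ht : t ≠ 0) :
    ∑' k : ℕ, (-1 : ℂ) ^ k * q ^ (k * (k + 1) / 2) * x ^ k * t ^ (-(k : ℤ) - 1) /
      (qPoch q q k * qPoch (q * x ^ 2) q k) = t⁻¹ * ser q x t⁻¹ := by
  rw [ser, ← tsum_mul_left]
  refine tsum_congr fun k => ?_
  rw [zpow_sub₀ ht, zpow_neg, zpow_natCast, zpow_one, sc, inv_pow]
  ring

/-- The Wronskian combination of the two solutions `g^{(0,x^{−1})}` and `g^{(0,x)}`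
at `t = ∞` of the x-deformed 4₁ equation. -/
theorem wronskian_gx
    (q : ℂ) (hq0 : 0 < ‖q‖) (hq1 : ‖q‖ < 1)
    (x : ℂ) (hx : x ≠ 0) (hx2 : ∀ n : ℤ, x ^ 2 ≠ q ^ n)
    (t : ℂ) (ht : t ≠ 0) (htq : ∀ n : ℤ, t ≠ q ^ n) :
    gxinv t x q * gxinv (q * t) x⁻¹ q - gxinv (q * t) x q * gxinv t x⁻¹ q =
      q⁻¹ * x * t ^ (-2 : ℤ) *
          (jtheta (q⁻¹ * x) q ^ 2 * jtheta (t * x) q * jtheta (t * x⁻¹) q) /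
        ((1 - x) ^ 2 * jtheta (x ^ (-2 : ℤ)) q * jtheta t q ^ 2 *
          qPochInf q q ^ 3) := by
  have hq : q ≠ 0 := norm_pos_iff.mp hq0
  have hx2' : ∀ j : ℕ, 1 - q * x ^ 2 * q ^ j ≠ 0 := by
    intro j h
    apply hx2 (-((j : ℤ) + 1))
    rw [zpow_neg, eq_comm, inv_eq_of_mul_eq_one_left]
    rw [zpow_add₀ hq, zpow_natCast, zpow_one]
    linear_combination -h
  have hy2' : ∀ j : ℕ, 1 - q * x⁻¹ ^ 2 * q ^ j ≠ 0 := by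
    intro j h
    apply hx2 ((j : ℤ) + 1)
    rw [zpow_add₀ hq, zpow_natCast, zpow_one]
    have : x ^ 2 * x⁻¹ ^ 2 = 1 := by rw [← mul_pow, mul_inv_cancel₀ hx, one_pow]
    linear_combination x ^ 2 * h + q * q ^ j * this
  have hx1 : 1 - x ≠ 0 := by
    intro h
    apply hx2 0
    rw [← sub_eq_zero.mp h]; simp
  have hxx : 1 - (x ^ 2)⁻¹ ≠ 0 := by
    intro h
    apply hx2 0
    rw [zpow_zero, ← inv_eq_one, ← sub_eq_zero.mp h]
  have hy := inv_ne_zero hx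
  have hqt := mul_ne_zero hq ht
  have hxs : x ^ 2 ≠ 0 := pow_ne_zero 2 hx
  have hW := casoratian q x (q * t)⁻¹ hq hq1 hx hx2' hy2' (inv_ne_zero hqt)
  have hv : q * (q * t)⁻¹ = t⁻¹ := by field_simp
  rw [hv] at hW
  have hQ := qPochInf_ne_zero q q hq1 (one_sub_pow_ne q hq1)
  have hA := qPochInf_ne_zero (q * x ^ 2) q hq1 hx2'
  have hB := qPochInf_ne_zero (q * x⁻¹ ^ 2) q hq1 hy2'
  have hth : jtheta (x ^ 2) q = qPochInf q q * (qPochInf (q * x ^ 2) q *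
      ((1 - (x ^ 2)⁻¹) * qPochInf (q * x⁻¹ ^ 2) q)) := by
    rw [jtp q (x ^ 2) hq hq1 hxs, qPochInf_shift (x ^ 2)⁻¹ q hq1, inv_pow]
  have hs1 := theta_shift q t hq hq1 ht
  have hs2 : jtheta (q * t * x) q = -(q⁻¹ * (t * x)⁻¹) * jtheta (t * x) q := by
    rw [mul_assoc, theta_shift q (t * x) hq hq1 (mul_ne_zero ht hx)]
  have hs3 : jtheta (q * t * x⁻¹) q = -(q⁻¹ * (t * x⁻¹)⁻¹) * jtheta (t * x⁻¹) q := by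
    rw [mul_assoc, theta_shift q (t * x⁻¹) hq hq1 (mul_ne_zero ht hy)]
  have hs4 : jtheta (q⁻¹ * x⁻¹) q = -x⁻¹ * jtheta (q⁻¹ * x) q := by
    have h1 := theta_inv q (q * x) hq hq1 (mul_ne_zero hq hx)
    have h2 := theta_shift q (q⁻¹ * x) hq hq1 (mul_ne_zero (inv_ne_zero hq) hx)
    rw [inv_mul_cancel_left₀ hq] at h1
    rw [mul_inv_cancel_left₀ hq] at h2
    rw [← mul_inv, h1, h2]
    field_simp
  have hz : x ^ (-2 : ℤ) = x⁻¹ ^ 2 := by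
    rw [zpow_neg, inv_pow]; norm_cast
  have hz' : t ^ (-2 : ℤ) = t⁻¹ ^ 2 := by
    rw [zpow_neg, inv_pow]; norm_cast
  have hT : jtheta t q ≠ 0 := by
    rw [jtp q t hq hq1 ht]
    refine mul_ne_zero hQ (mul_ne_zero ?_ ?_)
    · refine qPochInf_ne_zero _ q hq1 fun j h => htq (-((j : ℤ) + 1)) ?_
      rw [zpow_neg, eq_comm, inv_eq_of_mul_eq_one_left]
      rw [zpow_add₀ hq, zpow_natCast, zpow_one]
      linear_combination -h
    · refine qPochInf_ne_zero _ q hq1 fun j h => htq j ?_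
      rw [zpow_natCast]
      have := mul_inv_cancel₀ ht
      linear_combination t * h + q ^ j * this
  have hX : jtheta (x⁻¹ ^ 2) q ≠ 0 := by
    rw [jtp q _ hq hq1 (pow_ne_zero 2 hy)]
    refine mul_ne_zero hQ (mul_ne_zero hB ?_)
    rw [qPochInf_shift _ q hq1, inv_pow, inv_inv]
    refine mul_ne_zero ?_ hA
    intro h
    apply hx2 0
    rw [← sub_eq_zero.mp h]; simp
  simp only [gxinv]
  rw [ser_sum q x t ht, ser_sum q x _ hqt, ser_sum q x⁻¹ t ht, ser_sum q x⁻¹ _ hqt,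
    hs1, hs2, hs3, hs4, hz, hz', hth]
  generalize jtheta (x⁻¹ ^ 2) q = TX at *
  generalize jtheta t q = T at *
  generalize jtheta (t * x) q = T1 at *
  generalize jtheta (t * x⁻¹) q = T2 at *
  generalize jtheta (q⁻¹ * x) q = T3 at *
  generalize qPochInf (q * x ^ 2) q = A at *
  generalize qPochInf (q * x⁻¹ ^ 2) q = B at *
  generalize qPochInf q q = Q at *
  generalize ser q x t⁻¹ = F1 at *
  generalize ser q x⁻¹ t⁻¹ = F2 at *
  generalize ser q x (q * t)⁻¹ = G1 at *
  generalize ser q x⁻¹ (q * t)⁻¹ = G2 at *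
  have hy1 : 1 - x⁻¹ = -((1 - x) * x⁻¹) := by field_simp; ring
  have hxm : x - x⁻¹ = x * (1 - (x ^ 2)⁻¹) := by field_simp
  rw [hy1]
  rw [hxm] at hW
  generalize 1 - (x ^ 2)⁻¹ = M at *
  generalize 1 - x = N at *
  trans (T3 ^ 2 * T1 * T2 / (T ^ 2 * N ^ 2 * TX * M * Q ^ 3 * q * t ^ 2)) *
      (x * F1 * G2 - x⁻¹ * G1 * F2)
  · field_simp
    try ring
  · rw [hW]
    field_simp
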